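/- Every formal meromorphic solution of the A_2^(1) system has a pole of order exactly one; that is, if (c_n^i) is a formal meromorphic solution at t_0 of pole order r ≥ 1, then r = 1. -/

import Mathlib

/-!
The quadratic terms cancel in `f₀' + f₁' + f₂'`, so `f₀ + f₁ + f₂` is a polynomial and the leading
coefficients `xᵢ` of the `fᵢ` sum to zero. If `r ≥ 2`, the order `-2r` of `fᵢ (fᵢ₊₁ − fᵢ₊₂)` is
lower than the order `-r - 1` of `fᵢ'`, hence `xᵢ (xᵢ₊₁ − xᵢ₊₂) = 0` for each `i`. Together with
`x₀ + x₁ + x₂ = 0` this forces all `xᵢ` to vanish, contradicting the choice of `r`.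
-/

/-- A formal meromorphic solution of the `A₂⁽¹⁾` system
`fᵢ' = fᵢ (fᵢ₊₁ − fᵢ₊₂) + αᵢ` (indices mod 3) at a point `t₀`, of pole order `r ≥ 1`:
a family of coefficients `c i n` (`i : Fin 3`, `n : ℤ`) vanishing for `n < -r`,
with nonzero leading vector, satisfying the formal Laurent-series recurrence
`n cₙⁱ = Σ_{k=-r}^{n+r-1} cₖⁱ G_{n-k-1}ⁱ + δ_{n,1} αᵢ` where
`Gₙⁱ = cₙ^{i+1} − cₙ^{i+2}`. -/
def IsFormalMeromSolA2 (α : Fin 3 → ℂ) (r : ℤ) (c : Fin 3 → ℤ → ℂ) : Prop :=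
  1 ≤ r ∧
  (∃ i : Fin 3, c i (-r) ≠ 0) ∧
  (∀ (i : Fin 3) (n : ℤ), n < -r → c i n = 0) ∧
  ∀ (i : Fin 3) (n : ℤ),
    (n : ℂ) * c i n =
      (∑ k ∈ Finset.Icc (-r) (n + r - 1),
        c i k * (c (i + 1) (n - k - 1) - c (i + 2) (n - k - 1))) +
      (if n = 1 then α i else 0)

/-- The Cauchy product of two Laurent series with poles of order at most `r`, read off at degree
`-r - 1`, is symmetric. -/
lemma sum_mul_reflect (r : ℤ) (a b : ℤ → ℂ) :
    ∑ k ∈ Finset.Icc (-r) (-r + r - 1), a k * b (-r - k - 1) =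
      ∑ k ∈ Finset.Icc (-r) (-r + r - 1), b k * a (-r - k - 1) := by
  refine Finset.sum_nbij' (fun k => -r - k - 1) (fun k => -r - k - 1) ?_ ?_ ?_ ?_ ?_
  · intro k hk
    simp only [Finset.mem_Icc] at hk ⊢
    omega
  · intro k hk
    simp only [Finset.mem_Icc] at hk ⊢
    omega
  · intro k _
    ring
  · intro k _
    ring
  · intro k _
    rw [show -r - (-r - k - 1) - 1 = k by ring, mul_comm]

/-- The leading coefficients sum to zero, because `f₀ + f₁ + f₂` has constant derivative. -/
lemma sum_leading_eq_zero {α : Fin 3 → ℂ} {r : ℤ} {c : Fin 3 → ℤ → ℂ}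
    (h : IsFormalMeromSolA2 α r c) : c 0 (-r) + c 1 (-r) + c 2 (-r) = 0 := by
  obtain ⟨hr, -, -, hrec⟩ := h
  have h0 := hrec 0 (-r)
  have h1 := hrec 1 (-r)
  have h2 := hrec 2 (-r)
  have hne : -r ≠ 1 := by omega
  simp only [hne, if_false, add_zero, mul_sub, Finset.sum_sub_distrib] at h0 h1 h2
  simp only [show (0 : Fin 3) + 1 = 1 from rfl, show (0 : Fin 3) + 2 = 2 from rfl,
    show (1 : Fin 3) + 1 = 2 from rfl, show (1 : Fin 3) + 2 = 0 from rfl,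
    show (2 : Fin 3) + 1 = 0 from rfl, show (2 : Fin 3) + 2 = 1 from rfl] at h0 h1 h2
  have e01 := sum_mul_reflect r (c 0) (c 1)
  have e12 := sum_mul_reflect r (c 1) (c 2)
  have e20 := sum_mul_reflect r (c 2) (c 0)
  have hz : ((-r : ℤ) : ℂ) * (c 0 (-r) + c 1 (-r) + c 2 (-r)) = 0 := by
    linear_combination h0 + h1 + h2 + e01 + e12 + e20
  have hr0 : ((-r : ℤ) : ℂ) ≠ 0 := by
    rw [Int.cast_ne_zero]
    omega
  exact (mul_eq_zero.mp hz).resolve_left hr0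

/-- At a pole of order `r ≥ 2` the coefficient of `T ^ (-2r)` in `fᵢ (fᵢ₊₁ − fᵢ₊₂)` vanishes. -/
lemma leading_mul_eq_zero {α : Fin 3 → ℂ} {r : ℤ} {c : Fin 3 → ℤ → ℂ}
    (h : IsFormalMeromSolA2 α r c) (hr : 2 ≤ r) (i : Fin 3) :
    c i (-r) * (c (i + 1) (-r) - c (i + 2) (-r)) = 0 := by
  obtain ⟨-, -, hvan, hrec⟩ := h
  -- At `n = 1 - 2r` the sum in the recurrence consists of the single term `k = -r`.
  have hi := hrec i (1 - 2 * r)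
  rw [hvan i _ (by omega), if_neg (by omega), show 1 - 2 * r + r - 1 = -r by ring,
    Finset.Icc_self, Finset.sum_singleton, show 1 - 2 * r - -r - 1 = -r by ring] at hi
  simpa using hi.symm

/-- The products `x * y`, `y * z`, `z * x` have a common value `p`. Multiplying the sum by `x`
gives `x ^ 2 = -2 * p`, so `p ^ 2 = x ^ 2 * p = -2 * p ^ 2`; hence `p = 0` and `x = 0`. -/
lemma eq_zero_of_leading {x y z : ℂ} (hs : x + y + z = 0) (hy : y * (z - x) = 0)
    (hz : z * (x - y) = 0) : x = 0 := by
  have hxx : x ^ 2 = -2 * (y * z) := by linear_combination x * hs + hy - hz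
  have hp : (y * z) ^ 2 = 0 := by
    have h1 : (y * z) ^ 2 = x ^ 2 * (y * z) := by
      linear_combination y * z * hy + x * y * -hz
    linear_combination (1 / 3 : ℂ) * h1 + (1 / 3 : ℂ) * (y * z) * hxx
  have hp0 : y * z = 0 := pow_eq_zero_iff two_ne_zero |>.mp hp
  rw [hp0, mul_zero] at hxx
  exact pow_eq_zero_iff two_ne_zero |>.mp hxx

/-- Every formal meromorphic solution of the `A₂⁽¹⁾` system has a pole of order
exactly one. -/
theorem poleOrder_eq_one_A2 (α : Fin 3 → ℂ) (r : ℤ) (c : Fin 3 → ℤ → ℂ)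
    (h : IsFormalMeromSolA2 α r c) : r = 1 := by
  by_contra hne
  have hr : 2 ≤ r := by
    have := h.1
    omega
  have hs := sum_leading_eq_zero h
  have h0 : c 0 (-r) * (c 1 (-r) - c 2 (-r)) = 0 := leading_mul_eq_zero h hr 0
  have h1 : c 1 (-r) * (c 2 (-r) - c 0 (-r)) = 0 := leading_mul_eq_zero h hr 1
  have h2 : c 2 (-r) * (c 0 (-r) - c 1 (-r)) = 0 := leading_mul_eq_zero h hr 2
  obtain ⟨i, hi⟩ := h.2.1
  fin_cases i
  · exact hi (eq_zero_of_leading hs h1 h2)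
  · exact hi (eq_zero_of_leading (x := c 1 (-r)) (by linear_combination hs) h2 h0)
  · exact hi (eq_zero_of_leading (x := c 2 (-r)) (by linear_combination hs) h0 h1)
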